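/- Let k be a field, G a group, S ⊆ G a submonoid, and M a module over the monoid algebra k[S] equipped with a G-grading: an internal direct sum decomposition M = ⊕_{a ∈ G} M_a into k-subspaces such that for every s ∈ S and a ∈ G the action of the basis element of k[S] corresponding to s maps M_a into M_{s·a}. If M is generated as a k[S]-module by n homogeneous elements m_1 ∈ M_{x_1}, …, m_n ∈ M_{x_n}, then for every a ∈ G the homogeneous component M_a is a k-vector space of dimension at most n; in particular every homogeneous component of M is finite-dimensional over k. -/

import Mathlib

/-!
As a `k`-module, `M` is spanned by the translates `s • m i`, and these are homogeneous. Since the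
grading is independent, each component is spanned by the translates of its own degree. There is at
most one translate of degree `a` per generator, since `s * x i = a` determines `s`.
-/

open Cardinal
open scoped Pointwise

universe v w

theorem lift_mk_image_le_of_injOn {α : Type*} {β : Type v} {γ : Type w} {t : Set α} (f : α → β)
    {g : α → γ} (hg : Set.InjOn g t) : lift.{w} #(f '' t) ≤ lift.{v} #γ := by
  choose p hp hfp using fun y : f '' t ↦ y.2
  refine lift_mk_le_lift_mk_of_injective (f := fun y ↦ g (p y)) fun y z hyz ↦ Subtype.ext ?_
  rw [← hfp y, ← hfp z, hg (hp y) (hp z) hyz]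

theorem eq_span_image_of_iSupIndep {k Γ κ M : Type*} [Ring k] [AddCommGroup M] [Module k M]
    {ℳ : Γ → Submodule k M} (hindep : iSupIndep ℳ) {u : κ → M} {deg : κ → Γ}
    (hu : ∀ j, u j ∈ ℳ (deg j)) (hspan : Submodule.span k (Set.range u) = ⊤) (a : Γ) :
    ℳ a = Submodule.span k (u '' (deg ⁻¹' {a})) := by
  have hle (b : Γ) : Submodule.span k (u '' (deg ⁻¹' {b})) ≤ ℳ b := by
    rw [Submodule.span_le]
    rintro _ ⟨j, rfl, rfl⟩
    exact hu j
  have hsup : ⨆ b, Submodule.span k (u '' (deg ⁻¹' {b})) = ⊤ := by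
    rw [← Submodule.span_iUnion, ← Set.image_iUnion, ← Set.preimage_iUnion,
      Set.iUnion_of_singleton, Set.preimage_univ, Set.image_univ, hspan]
  exact (congrFun ((hindep.le_iff_eq_of_iSup_eq_top hsup).mp hle) a).symm

theorem span_range_monoidAlgebra_of (k S : Type*) [Semiring k] [MulOneClass S] :
    Submodule.span k (Set.range (MonoidAlgebra.of k S)) = ⊤ :=
  eq_top_iff.mpr fun f _ ↦
    Submodule.span_mono (Set.image_subset_range _ _) (MonoidAlgebra.mem_span_support_coeff f)

theorem span_range_of_smul {k S ι M : Type*} [Semiring k] [Monoid S] [AddCommMonoid M]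
    [Module k M] [Module (MonoidAlgebra k S) M] [IsScalarTower k (MonoidAlgebra k S) M]
    (m : ι → M) :
    Submodule.span k (Set.range fun p : S × ι ↦ MonoidAlgebra.of k S p.1 • m p.2) =
      (Submodule.span (MonoidAlgebra k S) (Set.range m)).restrictScalars k := by
  rw [← Submodule.span_smul_of_span_eq_top (span_range_monoidAlgebra_of k S), ← Set.image2_smul,
    Set.image2_range]

theorem graded_component_eq_span {k S Γ ι M : Type*} [Ring k] [Monoid S] [SMul S Γ]
    [AddCommGroup M] [Module k M] [Module (MonoidAlgebra k S) M]
    [IsScalarTower k (MonoidAlgebra k S) M] {ℳ : Γ → Submodule k M} (hindep : iSupIndep ℳ)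
    (hsmul : ∀ (s : S) (a : Γ), ∀ y ∈ ℳ a, MonoidAlgebra.of k S s • y ∈ ℳ (s • a))
    {m : ι → M} {x : ι → Γ} (hm : ∀ i, m i ∈ ℳ (x i))
    (hgen : Submodule.span (MonoidAlgebra k S) (Set.range m) = ⊤) (a : Γ) :
    ℳ a = Submodule.span k
      ((fun p : S × ι ↦ MonoidAlgebra.of k S p.1 • m p.2) '' {p | p.1 • x p.2 = a}) :=
  eq_span_image_of_iSupIndep hindep (deg := fun p : S × ι ↦ p.1 • x p.2)
    (fun p ↦ hsmul p.1 (x p.2) (m p.2) (hm p.2))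
    (by rw [span_range_of_smul, hgen, Submodule.restrictScalars_top]) a

theorem injOn_snd_setOf_smul_eq {S Γ ι : Type*} [SMul S Γ] {x : ι → Γ}
    (hx : ∀ i, Function.Injective fun s : S ↦ s • x i) (a : Γ) :
    Set.InjOn Prod.snd {p : S × ι | p.1 • x p.2 = a} := by
  rintro ⟨s, i⟩ hs ⟨t, _⟩ ht rfl
  exact Prod.ext (hx i (hs.trans ht.symm)) rfl

theorem graded_component_rank_le_general {k S Γ : Type*} {ι : Type w} {M : Type v} [Ring k]
    [StrongRankCondition k] [Monoid S] [SMul S Γ] [AddCommGroup M] [Module k M]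
    [Module (MonoidAlgebra k S) M] [IsScalarTower k (MonoidAlgebra k S) M]
    (ℳ : Γ → Submodule k M) (hindep : iSupIndep ℳ)
    (hsmul : ∀ (s : S) (a : Γ), ∀ y ∈ ℳ a, MonoidAlgebra.of k S s • y ∈ ℳ (s • a))
    (m : ι → M) (x : ι → Γ) (hx : ∀ i, Function.Injective fun s : S ↦ s • x i)
    (hm : ∀ i, m i ∈ ℳ (x i))
    (hgen : Submodule.span (MonoidAlgebra k S) (Set.range m) = ⊤) (a : Γ) :
    lift.{w} (Module.rank k (ℳ a)) ≤ lift.{v} #ι := by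
  rw [graded_component_eq_span hindep hsmul hm hgen a]
  exact (lift_le.mpr (rank_span_le _)).trans
    (lift_mk_image_le_of_injOn _ (injOn_snd_setOf_smul_eq hx a))

/-- Let `k` be a field, `G` a group, `S ⊆ G` a submonoid, and `M` a
module over the monoid algebra `k[S]` equipped with a `G`-grading: an internal direct sum
decomposition `M = ⊕_{a ∈ G} M_a` into `k`-subspaces such that for every `s ∈ S` and
`a ∈ G` the action of the basis element of `k[S]` corresponding to `s` maps `M_a` into
`M_{s·a}`.  If `M` is generated as a `k[S]`-module by `n` homogeneous elements
`m_1 ∈ M_{x_1}, …, m_n ∈ M_{x_n}`, then for every `a ∈ G` the homogeneous component `M_a`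
is a `k`-vector space of dimension at most `n`; in particular every homogeneous component
of `M` is finite-dimensional over `k`. -/
theorem graded_component_rank_le
    {k G M : Type*} [Field k] [Group G] [DecidableEq G] (S : Submonoid G)
    [AddCommGroup M] [Module k M] [Module (MonoidAlgebra k ↥S) M]
    [IsScalarTower k (MonoidAlgebra k ↥S) M]
    (ℳ : G → Submodule k M) (hinternal : DirectSum.IsInternal ℳ)
    (hcompat : ∀ (s : ↥S) (a : G), ∀ m ∈ ℳ a,
      (MonoidAlgebra.of k ↥S s) • m ∈ ℳ ((s : G) * a))
    (n : ℕ) (mvec : Fin n → M) (x : Fin n → G)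
    (hhom : ∀ i, mvec i ∈ ℳ (x i))
    (hgen : Submodule.span (MonoidAlgebra k ↥S) (Set.range mvec) = ⊤) :
    ∀ a : G, Module.rank k ↥(ℳ a) ≤ (n : Cardinal) := by
  intro a
  simpa using graded_component_rank_le_general ℳ hinternal.submodule_iSupIndep hcompat mvec x
    (fun i _ _ h ↦ Subtype.ext (mul_right_cancel h)) hhom hgen a
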